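/- For any real s > 0 and any real r > 0, ∫₀ʳ cos(su)·(cosh r − cosh u)^{1/2} du ≥ (cosh r)^{−1/2} · ∫₀ʳ cos(su)·(cosh r − cosh u) du. -/

import Mathlib

/-!
Put `C = cosh r`, `x = cosh u / C ∈ (0, 1]`, and `L y = ∫₀ʳ cos (s u) y(u) du`. Dividing by `√C`, the
claim becomes `L (1 - √(1 - x)) ≤ L x`.

The function `1 - √(1 - x)` is a limit of polynomials `p(x)` with nonnegative coefficients, without
constant term and with `p(1) ≤ 1` (`sqrtPoly`), so it is enough to show `L (x ^ k) ≤ s / (s² + 1)`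
for `k ≥ 1`; equality holds for `k = 1`. Since `cos (s r) = 0` and `sin (s r) = 1`, integrating by
parts twice gives, with `J k = L (cosh ^ k)`,
`(k² + s²) J k = s C ^ k + k (k - 1) J (k - 2)`   (`coshMoment_rec`),
and the bound follows by induction in steps of two (`coshMoment_le`). The case `k = 2` is the only
one which uses the size of `s r`, in the form `s r ≥ π / 2 ≥ 1`.
-/

open Real MeasureTheory

/-- The moment `∫₀ʳ cos (s u) cosh ^ k u du`. -/
noncomputable def coshMoment (s r : ℝ) (k : ℕ) : ℝ :=
  ∫ u in (0:ℝ)..r, Real.cos (s * u) * Real.cosh u ^ k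

lemma coshMoment_zero {s r : ℝ} (hs : 0 < s) (hsin : Real.sin (s * r) = 1) :
    coshMoment s r 0 = 1 / s := by
  have h : ∀ u ∈ Set.uIcc 0 r,
      HasDerivAt (fun u => Real.sin (s * u) / s) (Real.cos (s * u) * Real.cosh u ^ 0) u := by
    intro u _
    have h1 := ((Real.hasDerivAt_sin (s * u)).comp u ((hasDerivAt_id u).const_mul s)).div_const s
    refine h1.congr_deriv ?_
    field_simp
  rw [coshMoment, intervalIntegral.integral_eq_sub_of_hasDerivAt h
    (Continuous.intervalIntegrable (by fun_prop) _ _)]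
  simp [hsin]

lemma coshMoment_one {s r : ℝ} (hsin : Real.sin (s * r) = 1) (hcos : Real.cos (s * r) = 0) :
    coshMoment s r 1 = s * Real.cosh r / (s ^ 2 + 1) := by
  have h : ∀ u ∈ Set.uIcc 0 r, HasDerivAt
      (fun u => (Real.cos (s * u) * Real.sinh u + s * (Real.sin (s * u) * Real.cosh u))
        / (s ^ 2 + 1))
      (Real.cos (s * u) * Real.cosh u ^ 1) u := by
    intro u _
    have hl := (hasDerivAt_id u).const_mul s
    have hS := (Real.hasDerivAt_sin (s * u)).comp u hl
    have hC := (Real.hasDerivAt_cos (s * u)).comp u hl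
    have h1 := ((hC.mul (Real.hasDerivAt_sinh u)).add
      ((hS.mul (Real.hasDerivAt_cosh u)).const_mul s)).div_const (s ^ 2 + 1)
    refine h1.congr_deriv ?_
    simp only [Function.comp]
    field_simp
    ring
  rw [coshMoment, intervalIntegral.integral_eq_sub_of_hasDerivAt h
    (Continuous.intervalIntegrable (by fun_prop) _ _)]
  simp [hsin, hcos]

/-- Two integrations by parts, using
`(cosh ^ (k + 2))'' = (k + 2)² cosh ^ (k + 2) - (k + 2) (k + 1) cosh ^ k`. -/
lemma coshMoment_rec {s r : ℝ} (hsin : Real.sin (s * r) = 1) (hcos : Real.cos (s * r) = 0)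
    (k : ℕ) :
    (((k:ℝ) + 2) ^ 2 + s ^ 2) * coshMoment s r (k + 2) =
      s * Real.cosh r ^ (k + 2) + ((k:ℝ) + 2) * (k + 1) * coshMoment s r k := by
  have h : ∀ u ∈ Set.uIcc 0 r, HasDerivAt
      (fun u => Real.cos (s * u) * (((k:ℝ) + 2) * (Real.cosh u ^ (k + 1) * Real.sinh u))
        + s * (Real.sin (s * u) * Real.cosh u ^ (k + 2)))
      ((((k:ℝ) + 2) ^ 2 + s ^ 2) * (Real.cos (s * u) * Real.cosh u ^ (k + 2))
        - ((k:ℝ) + 2) * (k + 1) * (Real.cos (s * u) * Real.cosh u ^ k)) u := by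
    intro u _
    have hl := (hasDerivAt_id u).const_mul s
    have hS := (Real.hasDerivAt_sin (s * u)).comp u hl
    have hC := (Real.hasDerivAt_cos (s * u)).comp u hl
    have h1 := (hC.mul ((((Real.hasDerivAt_cosh u).pow (k + 1)).mul
      (Real.hasDerivAt_sinh u)).const_mul ((k:ℝ) + 2))).add
      ((hS.mul ((Real.hasDerivAt_cosh u).pow (k + 2))).const_mul s)
    refine h1.congr_deriv ?_
    simp only [Function.comp, Pi.pow_apply, Pi.mul_apply, Nat.add_sub_cancel]
    push_cast
    linear_combination -((k:ℝ) + 2) * (k + 1) * Real.cos (s * u) * Real.cosh u ^ k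
      * (Real.cosh_sq u)
  have h2 := intervalIntegral.integral_eq_sub_of_hasDerivAt h
    (Continuous.intervalIntegrable (by fun_prop) _ _)
  rw [intervalIntegral.integral_sub (Continuous.intervalIntegrable (by fun_prop) _ _)
    (Continuous.intervalIntegrable (by fun_prop) _ _), intervalIntegral.integral_const_mul,
    intervalIntegral.integral_const_mul] at h2
  simp only [hsin, hcos, mul_zero, Real.sin_zero, Real.sinh_zero] at h2
  unfold coshMoment
  linarith

lemma coshMoment_le {s r : ℝ} (hs : 0 < s) (hsr : 1 ≤ s * r)
    (hsin : Real.sin (s * r) = 1) (hcos : Real.cos (s * r) = 0) (k : ℕ) :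
    coshMoment s r (k + 1) ≤ s / (s ^ 2 + 1) * Real.cosh r ^ (k + 1) := by
  have hC1 : 1 ≤ Real.cosh r := Real.one_le_cosh r
  induction k using Nat.twoStepInduction with
  | zero => rw [coshMoment_one hsin hcos]; apply le_of_eq; ring
  | one =>
    have h := coshMoment_rec hsin hcos 0
    rw [coshMoment_zero hs hsin] at h
    norm_num at h
    have hr : 0 < r := by
      by_contra! h0
      nlinarith
    have hsh : r ≤ Real.sinh r := Real.self_le_sinh_iff.2 hr.le
    have hsq : 1 + r ^ 2 ≤ Real.cosh r ^ 2 := by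
      rw [Real.cosh_sq]; nlinarith
    have key : 2 * (s ^ 2 + 1) ≤ 3 * s ^ 2 * Real.cosh r ^ 2 := by
      have : s ^ 2 * (1 + r ^ 2) ≤ s ^ 2 * Real.cosh r ^ 2 := by gcongr
      nlinarith
    have : (4 + s ^ 2) * coshMoment s r 2
        ≤ (4 + s ^ 2) * (s / (s ^ 2 + 1) * Real.cosh r ^ 2) := by
      rw [h]
      have e : (4 + s ^ 2) * (s / (s ^ 2 + 1) * Real.cosh r ^ 2)
          - (s * Real.cosh r ^ 2 + 2 * s⁻¹)
          = (3 * s ^ 2 * Real.cosh r ^ 2 - 2 * (s ^ 2 + 1)) / (s * (s ^ 2 + 1)) := by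
        field_simp
        ring
      have : 0 ≤ (3 * s ^ 2 * Real.cosh r ^ 2 - 2 * (s ^ 2 + 1)) / (s * (s ^ 2 + 1)) :=
        div_nonneg (by linarith) (by positivity)
      linarith
    exact le_of_mul_le_mul_left this (by positivity)
  | more k ih _ =>
    have h := coshMoment_rec hsin hcos (k + 1)
    push_cast at h
    have hpow : Real.cosh r ^ (k + 1) ≤ Real.cosh r ^ (k + 3) :=
      pow_le_pow_right₀ hC1 (by omega)
    have ih' : coshMoment s r (k + 1) ≤ s / (s ^ 2 + 1) * Real.cosh r ^ (k + 3) :=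
      ih.trans (by gcongr)
    have hk : (0:ℝ) ≤ k := Nat.cast_nonneg k
    have : (((k:ℝ) + 1 + 2) ^ 2 + s ^ 2) * coshMoment s r (k + 1 + 2)
        ≤ (((k:ℝ) + 1 + 2) ^ 2 + s ^ 2) * (s / (s ^ 2 + 1) * Real.cosh r ^ (k + 3)) := by
      rw [h]
      have h3 := mul_le_mul_of_nonneg_left ih'
        (by positivity : (0:ℝ) ≤ ((k:ℝ) + 1 + 2) * (k + 1 + 1))
      have e : (((k:ℝ) + 1 + 2) ^ 2 + s ^ 2) * (s / (s ^ 2 + 1) * Real.cosh r ^ (k + 3))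
          - (s * Real.cosh r ^ (k + 3)
            + ((k:ℝ) + 1 + 2) * (k + 1 + 1) * (s / (s ^ 2 + 1) * Real.cosh r ^ (k + 3)))
          = (k + 2) * s * Real.cosh r ^ (k + 3) / (s ^ 2 + 1) := by
        field_simp
        ring
      have h4 : 0 ≤ (k + 2) * s * Real.cosh r ^ (k + 3) / (s ^ 2 + 1) := by positivity
      linarith [h3]
    exact le_of_mul_le_mul_left this (by positivity)

/-- The classical iteration `p ↦ (X + p²) / 2` started at `0`; on `[0, 1]` it increases to its
fixed point `1 - √(1 - x)`. -/
noncomputable def sqrtPoly : ℕ → Polynomial ℝ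
  | 0 => 0
  | n + 1 => Polynomial.C (1 / 2) * (Polynomial.X + sqrtPoly n * sqrtPoly n)

lemma sqrtPoly_coeff_nonneg (n k : ℕ) : 0 ≤ (sqrtPoly n).coeff k := by
  induction n generalizing k with
  | zero => simp [sqrtPoly]
  | succ n ih =>
    rw [sqrtPoly, Polynomial.coeff_C_mul, Polynomial.coeff_add, Polynomial.coeff_mul,
      Polynomial.coeff_X]
    have : 0 ≤ ∑ x ∈ Finset.HasAntidiagonal.antidiagonal k, (sqrtPoly n).coeff x.1 * (sqrtPoly n).coeff x.2 :=
      Finset.sum_nonneg fun x _ => mul_nonneg (ih _) (ih _)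
    split_ifs <;> linarith

lemma sqrtPoly_coeff_zero (n : ℕ) : (sqrtPoly n).coeff 0 = 0 := by
  induction n with
  | zero => simp [sqrtPoly]
  | succ n ih => simp [sqrtPoly, ih]

lemma sqrtPoly_eval_succ (n : ℕ) (x : ℝ) :
    (sqrtPoly (n + 1)).eval x = (x + (sqrtPoly n).eval x ^ 2) / 2 := by
  simp [sqrtPoly]
  ring

/-- The error `e` of the iteration satisfies `e' = e (q + p) / 2 ≤ e (1 - e / 2)`, where
`q = 1 - √(1 - x) ≤ 1`; this gives the rate `2 / (n + 2)`, uniformly up to `x = 1`. -/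
lemma sqrtPoly_bounds {x : ℝ} (h0 : 0 ≤ x) (h1 : x ≤ 1) (n : ℕ) :
    0 ≤ (sqrtPoly n).eval x ∧ (sqrtPoly n).eval x ≤ 1 - √(1 - x) ∧
      1 - √(1 - x) - (sqrtPoly n).eval x ≤ 2 / (n + 2) := by
  have hw0 : 0 ≤ √(1 - x) := Real.sqrt_nonneg _
  have hw2 : √(1 - x) ^ 2 = 1 - x := Real.sq_sqrt (by linarith)
  have hw1 : √(1 - x) ≤ 1 := by nlinarith
  induction n with
  | zero => simpa [sqrtPoly] using h0
  | succ n ih =>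
    obtain ⟨i0, i1, i2⟩ := ih
    rw [sqrtPoly_eval_succ]
    set p := (sqrtPoly n).eval x
    set w := √(1 - x)
    refine ⟨by positivity, by nlinarith, ?_⟩
    have hn : (0:ℝ) ≤ n := Nat.cast_nonneg n
    have ht : (2:ℝ) / (n + 2) ≤ 1 := by rw [div_le_one (by positivity)]; linarith
    have a : 1 - w - (x + p ^ 2) / 2 ≤ (1 - w - p) * (1 - (1 - w - p) / 2) := by nlinarith
    have b : (1 - w - p) * (1 - (1 - w - p) / 2)
        ≤ (2 / ((n:ℝ) + 2)) * (1 - (2 / ((n:ℝ) + 2)) / 2) := by nlinarith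
    have c : (2 / ((n:ℝ) + 2)) * (1 - (2 / ((n:ℝ) + 2)) / 2) ≤ 2 / ((n + 1 : ℕ) + 2 : ℝ) := by
      have e : (2 / ((n:ℝ) + 2)) * (1 - (2 / ((n:ℝ) + 2)) / 2)
          = 2 * (n + 1) / ((n:ℝ) + 2) ^ 2 := by
        field_simp
        ring
      rw [e, div_le_div_iff₀ (by positivity) (by positivity)]
      push_cast
      nlinarith
    linarith

lemma integral_sqrtPoly_le {s r : ℝ} (hs : 0 < s) (hsr : 1 ≤ s * r)
    (hsin : Real.sin (s * r) = 1) (hcos : Real.cos (s * r) = 0) (n : ℕ) :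
    (∫ u in (0:ℝ)..r, Real.cos (s * u) * (sqrtPoly n).eval (Real.cosh u / Real.cosh r))
      ≤ s / (s ^ 2 + 1) := by
  have hC : 0 < Real.cosh r := Real.cosh_pos r
  have hE : ∀ u, Real.cos (s * u) * (sqrtPoly n).eval (Real.cosh u / Real.cosh r)
      = ∑ k ∈ Finset.range ((sqrtPoly n).natDegree + 1),
        ((sqrtPoly n).coeff k / Real.cosh r ^ k) * (Real.cos (s * u) * Real.cosh u ^ k) := by
    intro u
    rw [Polynomial.eval_eq_sum_range, Finset.mul_sum]
    refine Finset.sum_congr rfl fun k _ => ?_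
    rw [div_pow]
    ring
  simp_rw [hE]
  rw [intervalIntegral.integral_finsetSum
    fun k _ => Continuous.intervalIntegrable (by fun_prop) _ _]
  simp_rw [intervalIntegral.integral_const_mul]
  have hle : ∀ k ∈ Finset.range ((sqrtPoly n).natDegree + 1),
      ((sqrtPoly n).coeff k / Real.cosh r ^ k) *
        (∫ u in (0:ℝ)..r, Real.cos (s * u) * Real.cosh u ^ k)
      ≤ (sqrtPoly n).coeff k * 1 ^ k * (s / (s ^ 2 + 1)) := by
    intro k _
    rcases k with _ | k
    · simp [sqrtPoly_coeff_zero]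
    · have h := mul_le_mul_of_nonneg_left (coshMoment_le hs hsr hsin hcos k)
        (div_nonneg (sqrtPoly_coeff_nonneg n (k + 1)) (pow_pos hC (k + 1)).le)
      refine h.trans (le_of_eq ?_)
      field_simp
      simp
  refine (Finset.sum_le_sum hle).trans ?_
  rw [← Finset.sum_mul, ← Polynomial.eval_eq_sum_range]
  have h1 := (sqrtPoly_bounds (zero_le_one) (le_refl (1:ℝ)) n).2.1
  simp only [sub_self, Real.sqrt_zero, sub_zero] at h1
  exact mul_le_of_le_one_left (by positivity) h1

lemma integral_sqrt_le {s r : ℝ} (hs : 0 < s) (hr : 0 ≤ r) (hsr : 1 ≤ s * r)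
    (hsin : Real.sin (s * r) = 1) (hcos : Real.cos (s * r) = 0) :
    (∫ u in (0:ℝ)..r, Real.cos (s * u) * (1 - √(1 - Real.cosh u / Real.cosh r)))
      ≤ s / (s ^ 2 + 1) := by
  have hC : 0 < Real.cosh r := Real.cosh_pos r
  have hx : ∀ u ∈ Set.uIoc 0 r,
      0 ≤ Real.cosh u / Real.cosh r ∧ Real.cosh u / Real.cosh r ≤ 1 := by
    intro u hu
    rw [Set.uIoc_of_le hr] at hu
    refine ⟨div_nonneg (Real.cosh_pos u).le hC.le, ?_⟩
    rw [div_le_one hC, Real.cosh_le_cosh, abs_of_pos hu.1, abs_of_nonneg hr]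
    exact hu.2
  have hlim : Filter.Tendsto (fun n => ∫ u in (0:ℝ)..r,
      Real.cos (s * u) * (sqrtPoly n).eval (Real.cosh u / Real.cosh r)) Filter.atTop
      (nhds (∫ u in (0:ℝ)..r, Real.cos (s * u) * (1 - √(1 - Real.cosh u / Real.cosh r)))) := by
    refine intervalIntegral.tendsto_integral_filter_of_dominated_convergence (fun _ => 1) ?_ ?_
      (by simp) ?_
    · refine Filter.Eventually.of_forall fun n => Continuous.aestronglyMeasurable ?_
      exact (by fun_prop : Continuous fun u => Real.cos (s * u)).mul
        ((sqrtPoly n).continuous.comp (by fun_prop))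
    · refine Filter.Eventually.of_forall fun n => Filter.Eventually.of_forall fun u hu => ?_
      obtain ⟨b0, b1, _⟩ := sqrtPoly_bounds (hx u hu).1 (hx u hu).2 n
      rw [norm_mul, Real.norm_eq_abs, Real.norm_eq_abs, abs_of_nonneg b0]
      exact mul_le_one₀ (Real.abs_cos_le_one _) b0
        (by linarith [Real.sqrt_nonneg (1 - Real.cosh u / Real.cosh r)])
    · refine Filter.Eventually.of_forall fun u hu => Filter.Tendsto.const_mul _ ?_
      have hb := sqrtPoly_bounds (hx u hu).1 (hx u hu).2
      have h2 : Filter.Tendsto (fun n : ℕ => (2:ℝ) / (n + 2)) Filter.atTop (nhds 0) :=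
        tendsto_const_nhds.div_atTop
          (Filter.tendsto_atTop_add_const_right _ _ tendsto_natCast_atTop_atTop)
      refine tendsto_of_tendsto_of_tendsto_of_le_of_le
        (g := fun n : ℕ => 1 - √(1 - Real.cosh u / Real.cosh r) - (2:ℝ) / (n + 2))
        (by simpa using h2.const_sub (1 - √(1 - Real.cosh u / Real.cosh r)))
        tendsto_const_nhds (fun n => ?_) (fun n => (hb n).2.1)
      linarith [(hb n).2.2]
  exact le_of_tendsto hlim
    (Filter.Eventually.of_forall fun n => integral_sqrtPoly_le hs hsr hsin hcos n)

theorem stmt_1 (s : ℝ) (hs : 0 < s) (n : ℕ) (r : ℝ)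
    (hr : r = Real.pi * (2 * n + 1 / 2) / s) :
    (∫ u in (0:ℝ)..r, Real.cos (s * u) * Real.sqrt (Real.cosh r - Real.cosh u)) ≥
      (Real.cosh r) ^ (-(1:ℝ)/2) *
        ∫ u in (0:ℝ)..r, Real.cos (s * u) * (Real.cosh r - Real.cosh u) := by
  have hsr : s * r = Real.pi / 2 + n * (2 * Real.pi) := by
    rw [hr]
    field_simp
    ring
  have hsin : Real.sin (s * r) = 1 := by
    rw [hsr, Real.sin_add_nat_mul_two_pi, Real.sin_pi_div_two]
  have hcos : Real.cos (s * r) = 0 := by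
    rw [hsr, Real.cos_add_nat_mul_two_pi, Real.cos_pi_div_two]
  have hn : (0:ℝ) ≤ n := Nat.cast_nonneg n
  have h1 : 1 ≤ s * r := by
    rw [hsr]
    have := Real.pi_gt_three
    have : 0 ≤ n * (2 * Real.pi) := by positivity
    linarith
  have hr0 : 0 ≤ r := by rw [hr]; positivity
  have hC : 0 < Real.cosh r := Real.cosh_pos r
  have hpow : Real.cosh r ^ (-(1:ℝ)/2) = 1 / √(Real.cosh r) := by
    rw [Real.sqrt_eq_rpow, neg_div, Real.rpow_neg hC.le, one_div (Real.cosh r ^ _)]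
  have hmain := integral_sqrt_le hs hr0 h1 hsin hcos
  have hJ0 := coshMoment_zero hs hsin
  have hJ1 := coshMoment_one hsin hcos
  simp only [coshMoment, pow_zero, pow_one, mul_one] at hJ0 hJ1
  have hq : 0 < √(Real.cosh r) := Real.sqrt_pos.2 hC
  have hqq : √(Real.cosh r) * √(Real.cosh r) = Real.cosh r := Real.mul_self_sqrt hC.le
  have eL : ∀ u, Real.cos (s * u) * √(Real.cosh r - Real.cosh u)
      = √(Real.cosh r) * (Real.cos (s * u)
        - Real.cos (s * u) * (1 - √(1 - Real.cosh u / Real.cosh r))) := by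
    intro u
    have : Real.cosh r - Real.cosh u = Real.cosh r * (1 - Real.cosh u / Real.cosh r) := by
      field_simp
    rw [this, Real.sqrt_mul hC.le]
    ring
  have hL : (∫ u in (0:ℝ)..r, Real.cos (s * u) * √(Real.cosh r - Real.cosh u))
      = √(Real.cosh r) * (1 / s
        - ∫ u in (0:ℝ)..r, Real.cos (s * u) * (1 - √(1 - Real.cosh u / Real.cosh r))) := by
    simp_rw [eL]
    rw [intervalIntegral.integral_const_mul, intervalIntegral.integral_sub
      (Continuous.intervalIntegrable (by fun_prop) _ _)
      (Continuous.intervalIntegrable (by fun_prop) _ _), hJ0]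
  have hR : (∫ u in (0:ℝ)..r, Real.cos (s * u) * (Real.cosh r - Real.cosh u))
      = Real.cosh r * (1 / s - s / (s ^ 2 + 1)) := by
    simp_rw [mul_sub]
    rw [intervalIntegral.integral_sub
      (Continuous.intervalIntegrable (by fun_prop) _ _)
      (Continuous.intervalIntegrable (by fun_prop) _ _), intervalIntegral.integral_mul_const,
      hJ0, hJ1]
    ring
  rw [hL, hR, hpow, ge_iff_le]
  have e : 1 / √(Real.cosh r) * (Real.cosh r * (1 / s - s / (s ^ 2 + 1)))
      = √(Real.cosh r) * (1 / s - s / (s ^ 2 + 1)) := by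
    rw [← mul_assoc, one_div_mul_eq_div, Real.div_sqrt]
  rw [e]
  gcongr
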